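/- Fix ω0 ∈ ℝ, σ0² > 0, σH² > 0, and h ∈ (0,1). Define p(s) := h·φ(s; ω0, σH²+σ0²) / (h·φ(s; ω0, σH²+σ0²) + (1−h)·φ(s; ω0, σL²+σ0²)) and the uncensored optimal action a*(s, ∞) := p(s)·(σH²·ω0 + σ0²·s)/(σH² + σ0²) + (1−p(s))·(σL²·ω0 + σ0²·s)/(σL² + σ0²). Then there exists a threshold σ̄L² such that whenever σL² > σ̄L², the function s ↦ a*(s, ∞) is not monotone: in particular there exist signals s₁, s₂ with ω0 < s₁ < s₂ and a*(s₁, ∞) > a*(s₂, ∞). -/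

import Mathlib

open MeasureTheory Real Filter

/-- The Gaussian density with mean `m` and variance `v`. -/
noncomputable def gauss (x m v : ℝ) : ℝ :=
  (Real.sqrt (2 * Real.pi * v))⁻¹ * Real.exp (-(x - m) ^ 2 / (2 * v))

/-- `p(s)`: the posterior probability of a high-quality source given signal `s`. -/
noncomputable def pHigh (ω0 v0 vH vL h s : ℝ) : ℝ :=
  h * gauss s ω0 (vH + v0) /
    (h * gauss s ω0 (vH + v0) + (1 - h) * gauss s ω0 (vL + v0))

/-- The uncensored optimal action `a*(s,∞)`. -/
noncomputable def aUncens (ω0 v0 vH vL h s : ℝ) : ℝ :=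
  pHigh ω0 v0 vH vL h s * ((vH * ω0 + v0 * s) / (vH + v0)) +
    (1 - pHigh ω0 v0 vH vL h s) * ((vL * ω0 + v0 * s) / (vL + v0))

/-!
A fixed signal `s` is attributed to the high-quality source once `vL` is large, because the
low-quality density flattens out; so `a*(s,∞)` tends to the high-quality posterior mean, which
exceeds `ω0` when `s > ω0`. A signal at distance of order `√vL` from `ω0` is instead attributed to
the low-quality source, the high-quality density there being exponentially small in `vL`, and such a
source moves the action by only `O(1 / √vL)`; so the action returns to `ω0`.
-/

open scoped Topology

section Gauss

variable (x m v : ℝ)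

lemma gauss_nonneg : 0 ≤ gauss x m v := by
  unfold gauss
  positivity

variable {v} in
lemma gauss_pos (hv : 0 < v) : 0 < gauss x m v := by
  unfold gauss
  positivity

lemma tendsto_gauss_variance_atTop : Tendsto (gauss x m) atTop (𝓝 0) := by
  have h_scale : Tendsto (fun v : ℝ => (√(2 * π * v))⁻¹) atTop (𝓝 0) :=
    (tendsto_sqrt_atTop.comp (tendsto_id.const_mul_atTop two_pi_pos)).inv_tendsto_atTop
  have h_exp : Tendsto (fun v : ℝ => exp (-(x - m) ^ 2 / (2 * v))) atTop (𝓝 (exp 0)) :=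
    (continuous_exp.tendsto 0).comp
      (tendsto_const_nhds.div_atTop (tendsto_id.const_mul_atTop two_pos))
  simpa only [gauss, zero_mul] using! h_scale.mul h_exp

lemma gauss_div_gauss_add_mul_sqrt (t : ℝ) {w : ℝ} (hw : 0 < w) :
    gauss (m + t * √w) m v / gauss (m + t * √w) m w =
      √w / √v * exp (t ^ 2 / 2) * exp (-(t ^ 2 / (2 * v)) * w) := by
  have h_sq : (m + t * √w - m) ^ 2 = t ^ 2 * w := by
    rw [add_sub_cancel_left, mul_pow, sq_sqrt hw.le]
  have h_exp_v : -(t ^ 2 * w) / (2 * v) = -(t ^ 2 / (2 * v)) * w := by ring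
  have h_exp_w : -(t ^ 2 * w) / (2 * w) = -(t ^ 2 / 2) := by field_simp
  unfold gauss
  rw [h_sq, h_exp_v, h_exp_w, exp_neg, sqrt_mul two_pi_pos.le v, sqrt_mul two_pi_pos.le w]
  field_simp

end Gauss

section Posterior

variable (ω0 v0 vH vL s : ℝ) {h : ℝ}

lemma pHigh_mem_Icc (hh : h ∈ Set.Icc 0 1) : pHigh ω0 v0 vH vL h s ∈ Set.Icc 0 1 := by
  have h_high := mul_nonneg hh.1 (gauss_nonneg s ω0 (vH + v0))
  have h_low := mul_nonneg (sub_nonneg.2 hh.2) (gauss_nonneg s ω0 (vL + v0))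
  exact ⟨div_nonneg h_high (add_nonneg h_high h_low),
    div_le_one_of_le₀ (le_add_of_nonneg_right h_low) (add_nonneg h_high h_low)⟩

variable {v0 vL} in
lemma pHigh_le_odds (hL : 0 < vL + v0) (hh0 : 0 ≤ h) (hh1 : h < 1) :
    pHigh ω0 v0 vH vL h s ≤
      h / (1 - h) * (gauss s ω0 (vH + v0) / gauss s ω0 (vL + v0)) := by
  have h_high := mul_nonneg hh0 (gauss_nonneg s ω0 (vH + v0))
  have h_low := mul_pos (sub_pos.2 hh1) (gauss_pos s ω0 hL)
  rw [div_mul_div_comm]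
  exact div_le_div_of_nonneg_left h_high h_low (le_add_of_nonneg_left h_high)

variable {v0 vH}

lemma tendsto_pHigh_atTop (hH : 0 < vH + v0) (hh : h ≠ 0) :
    Tendsto (fun vL => pHigh ω0 v0 vH vL h s) atTop (𝓝 1) := by
  have h_high : h * gauss s ω0 (vH + v0) ≠ 0 := mul_ne_zero hh (gauss_pos s ω0 hH).ne'
  have h_low : Tendsto (fun vL => (1 - h) * gauss s ω0 (vL + v0)) atTop (𝓝 0) := by
    simpa only [mul_zero] using! ((tendsto_gauss_variance_atTop s ω0).comp
      (tendsto_atTop_add_const_right _ v0 tendsto_id)).const_mul (1 - h)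
  have h_total := h_low.const_add (h * gauss s ω0 (vH + v0))
  rw [add_zero] at h_total
  rw [← div_self h_high]
  exact tendsto_const_nhds.div h_total h_high

lemma tendsto_pHigh_add_mul_sqrt_mul_sqrt (hH : 0 < vH + v0) (hh0 : 0 ≤ h) (hh1 : h < 1)
    {t : ℝ} (ht : t ≠ 0) :
    Tendsto (fun vL => pHigh ω0 v0 vH vL h (ω0 + t * √(vL + v0)) * √(vL + v0)) atTop (𝓝 0) := by
  set K := h / (1 - h) * (exp (t ^ 2 / 2) / √(vH + v0))
  have h_bound : Tendsto
      (fun vL : ℝ => K * ((vL + v0) * exp (-(t ^ 2 / (2 * (vH + v0))) * (vL + v0))))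
      atTop (𝓝 0) := by
    simpa [Function.comp_def] using
      ((tendsto_rpow_mul_exp_neg_mul_atTop_nhds_zero 1 (t ^ 2 / (2 * (vH + v0)))
        (by positivity)).comp (tendsto_atTop_add_const_right _ v0 tendsto_id)).const_mul K
  refine squeeze_zero' (.of_forall fun vL =>
    mul_nonneg (pHigh_mem_Icc _ _ _ _ _ ⟨hh0, hh1.le⟩).1 (sqrt_nonneg _)) ?_ h_bound
  filter_upwards [eventually_gt_atTop (-v0)] with vL hvL
  have hL : 0 < vL + v0 := neg_lt_iff_pos_add.1 hvL
  calc pHigh ω0 v0 vH vL h (ω0 + t * √(vL + v0)) * √(vL + v0)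
      ≤ h / (1 - h) * (gauss (ω0 + t * √(vL + v0)) ω0 (vH + v0) /
          gauss (ω0 + t * √(vL + v0)) ω0 (vL + v0)) * √(vL + v0) := by
        gcongr
        exact pHigh_le_odds ω0 vH _ hL hh0 hh1
    _ = K * (√(vL + v0) * √(vL + v0) * exp (-(t ^ 2 / (2 * (vH + v0))) * (vL + v0))) := by
        rw [gauss_div_gauss_add_mul_sqrt ω0 (vH + v0) t hL]
        ring
    _ = K * ((vL + v0) * exp (-(t ^ 2 / (2 * (vH + v0))) * (vL + v0))) := by
        rw [mul_self_sqrt hL.le]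

end Posterior

section Action

variable (ω0 s : ℝ) {v0 vH h : ℝ}

lemma aUncens_eq_add_mul_sub (h : ℝ) {vL : ℝ} (hH : vH + v0 ≠ 0) (hL : vL + v0 ≠ 0) :
    aUncens ω0 v0 vH vL h s =
      ω0 + (pHigh ω0 v0 vH vL h s * (v0 / (vH + v0)) +
        (1 - pHigh ω0 v0 vH vL h s) * (v0 / (vL + v0))) * (s - ω0) := by
  unfold aUncens
  field_simp
  ring

lemma tendsto_aUncens_atTop (hH : 0 < vH + v0) (hh : h ≠ 0) :
    Tendsto (fun vL => aUncens ω0 v0 vH vL h s) atTop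
      (𝓝 (ω0 + v0 / (vH + v0) * (s - ω0))) := by
  have hp := tendsto_pHigh_atTop ω0 s hH hh
  have h_low_gain : Tendsto (fun vL => v0 / (vL + v0)) atTop (𝓝 0) :=
    tendsto_const_nhds.div_atTop (tendsto_atTop_add_const_right _ v0 tendsto_id)
  have h_lim := (((hp.mul_const (v0 / (vH + v0))).add
    ((hp.const_sub 1).mul h_low_gain)).mul_const (s - ω0)).const_add ω0
  rw [one_mul, mul_zero, add_zero] at h_lim
  refine h_lim.congr' ?_
  filter_upwards [eventually_gt_atTop (-v0)] with vL hvL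
  exact (aUncens_eq_add_mul_sub ω0 s h hH.ne' (neg_lt_iff_pos_add.1 hvL).ne').symm

lemma tendsto_aUncens_add_mul_sqrt (hH : 0 < vH + v0) (hh0 : 0 ≤ h) (hh1 : h < 1)
    {t : ℝ} (ht : t ≠ 0) :
    Tendsto (fun vL => aUncens ω0 v0 vH vL h (ω0 + t * √(vL + v0))) atTop (𝓝 ω0) := by
  set p := fun vL => pHigh ω0 v0 vH vL h (ω0 + t * √(vL + v0))
  have hp_mem (vL : ℝ) : p vL ∈ Set.Icc 0 1 := pHigh_mem_Icc _ _ _ _ _ ⟨hh0, hh1.le⟩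
  have h_high : Tendsto (fun vL => p vL * √(vL + v0)) atTop (𝓝 0) :=
    tendsto_pHigh_add_mul_sqrt_mul_sqrt ω0 hH hh0 hh1 ht
  have h_inv_sqrt : Tendsto (fun vL => (√(vL + v0))⁻¹) atTop (𝓝 0) :=
    (tendsto_sqrt_atTop.comp
      (tendsto_atTop_add_const_right _ v0 tendsto_id)).inv_tendsto_atTop
  have h_low : Tendsto (fun vL => (1 - p vL) * (√(vL + v0))⁻¹) atTop (𝓝 0) :=
    bdd_le_mul_tendsto_zero (.of_forall fun vL => sub_nonneg.2 (hp_mem vL).2)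
      (.of_forall fun vL => sub_le_self 1 (hp_mem vL).1) h_inv_sqrt
  have h_lim := ((h_high.const_mul (v0 / (vH + v0) * t)).add
    (h_low.const_mul (v0 * t))).const_add ω0
  simp only [mul_zero, add_zero] at h_lim
  refine h_lim.congr' ?_
  filter_upwards [eventually_gt_atTop (-v0)] with vL hvL
  rw [aUncens_eq_add_mul_sub ω0 _ h hH.ne' (neg_lt_iff_pos_add.1 hvL).ne', ← sqrt_div_self]
  ring

end Action

/-- Proposition 4 (`prop:actionnonmon`): for large enough low-type variance, the uncensored
optimal action is not monotone in the signal; in particular there exist signals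
`ω0 < s₁ < s₂` with `a*(s₁,∞) > a*(s₂,∞)`. -/
theorem stmt_5 (ω0 v0 vH h : ℝ) (hv0 : 0 < v0) (hvH : 0 < vH)
    (hh0 : 0 < h) (hh1 : h < 1) :
    ∃ ν : ℝ, ∀ vL : ℝ, ν < vL →
      ¬ Monotone (fun s => aUncens ω0 v0 vH vL h s) ∧
      ∃ s₁ s₂ : ℝ, ω0 < s₁ ∧ s₁ < s₂ ∧
        aUncens ω0 v0 vH vL h s₂ < aUncens ω0 v0 vH vL h s₁ := by
  have hH : 0 < vH + v0 := add_pos hvH hv0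
  have h_near := tendsto_aUncens_atTop ω0 (ω0 + 1) hH hh0.ne'
  have h_far := tendsto_aUncens_add_mul_sqrt ω0 hH hh0.le hh1 one_ne_zero
  simp only [one_mul] at h_far
  have h_gap : ω0 < ω0 + v0 / (vH + v0) * (ω0 + 1 - ω0) := by
    rw [add_sub_cancel_left, mul_one]
    exact lt_add_of_pos_right ω0 (div_pos hv0 hH)
  obtain ⟨ν, hν⟩ := eventually_atTop.1
    ((h_far.eventually_lt h_near h_gap).and (eventually_gt_atTop 1))
  refine ⟨ν, fun vL hvL => ?_⟩
  obtain ⟨h_drop, hvL_one⟩ := hν vL hvL.le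
  have h_signals : ω0 + 1 < ω0 + √(vL + v0) := by
    gcongr
    rw [lt_sqrt zero_le_one]
    linarith
  exact ⟨fun h_mono => (h_mono h_signals.le).not_gt h_drop,
    ω0 + 1, ω0 + √(vL + v0), lt_add_one ω0, h_signals, h_drop⟩
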